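/- arXiv:2012.05777 — 3 statements merged into one kernel-verified Lean document; each statement's English description precedes it below -/
import Mathlib

section
/- Let E be a finite-dimensional real normed vector space, F a real normed vector space, U ⊆ E an open convex set, K ≥ 0, and let s ⊆ E be a finite union of proper affine subspaces of E. Suppose f : E → F is continuous on U, is differentiable at every point of U \ s, and satisfies ‖Df_x‖ ≤ K (operator norm of the Fréchet derivative) for every x ∈ U \ s. Then f is K-Lipschitz on U: ‖f(z) − f(z')‖ ≤ K‖z − z'‖ for all z, z' ∈ U. -/
/-!
On a segment that meets the exceptional set in countably many points, the mean value inequality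
survives by an argument of Zygmund: for `r > K` the function `h t = ‖g t - g 0‖ - r * t` never
crosses upwards a level attained at no exceptional parameter, and such levels are dense because the
exceptional ones are countable.

A segment whose direction lies outside the direction of every affine subspace meets their
finite union in finitely many points. Such directions are dense, since a finite union of proper
subspaces is not the whole space, so continuity of `f` reaches all the remaining segments.
-/

open Set Filter Topology

section Directions

theorem subsingleton_setOf_add_smul_mem_of_notMem_direction {𝕜 E : Type*} [DivisionRing 𝕜]
    [AddCommGroup E] [Module 𝕜 E] {W : AffineSubspace 𝕜 E} {v : E} (hv : v ∉ W.direction)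
    (x : E) : {t : 𝕜 | x + t • v ∈ W}.Subsingleton := by
  intro t ht t' ht'
  by_contra hne
  have hsmul : (t - t') • v ∈ W.direction := by
    simpa [sub_smul] using AffineSubspace.vsub_mem_direction ht ht'
  exact hv ((W.direction.smul_mem_iff (sub_ne_zero.2 hne)).1 hsmul)

variable {𝕜 E : Type*} [NontriviallyNormedField 𝕜] [AddCommGroup E] [Module 𝕜 E]
  [TopologicalSpace E] [ContinuousAdd E] [ContinuousSMul 𝕜 E]

theorem dense_setOf_forall_notMem_submodule
    {P : Set (Submodule 𝕜 E)} (hPfin : P.Finite) (hP : ⊤ ∉ P) :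
    Dense {v : E | ∀ p ∈ P, v ∉ p} := by
  obtain ⟨v, hv⟩ : ∃ v : E, ∀ p ∈ P, v ∉ p := by
    have hne := Subspace.biUnion_ne_univ_of_top_notMem (s := hPfin.toFinset) (by simpa using hP)
    simpa [ne_univ_iff_exists_notMem] using hne
  intro x
  have hlim : Tendsto (fun t : 𝕜 ↦ x + t • v) (𝓝[≠] 0) (𝓝 x) := by
    have hcont : Continuous fun t : 𝕜 ↦ x + t • v := by fun_prop
    simpa using (hcont.tendsto 0).mono_left nhdsWithin_le_nhds
  refine mem_closure_of_tendsto hlim ((eventually_all_finite hPfin).2 fun p hp ↦ ?_)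
  have hline : {t : 𝕜 | x + t • v ∈ p}.Subsingleton :=
    subsingleton_setOf_add_smul_mem_of_notMem_direction (W := p.toAffineSubspace)
      (by simpa using hv p hp) x
  exact nhdsNE_le_cofinite 0 hline.finite.compl_mem_cofinite

theorem dense_setOf_forall_finite_add_smul_mem_biUnion
    {S : Set (AffineSubspace 𝕜 E)} (hS : S.Finite) (hproper : ∀ W ∈ S, W.direction ≠ ⊤) :
    Dense {v : E | ∀ x, {t : 𝕜 | x + t • v ∈ ⋃ W ∈ S, (W : Set E)}.Finite} := by
  have hdense : Dense {v : E | ∀ p ∈ AffineSubspace.direction '' S, v ∉ p} :=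
    dense_setOf_forall_notMem_submodule (hS.image _) (by simpa using hproper)
  refine hdense.mono fun v hv x ↦ ?_
  have hfin : (⋃ W ∈ S, {t : 𝕜 | x + t • v ∈ W}).Finite := hS.biUnion fun W hW ↦
    (subsingleton_setOf_add_smul_mem_of_notMem_direction (hv _ (mem_image_of_mem _ hW)) x).finite
  simpa only [mem_iUnion, ofPred_exists] using! hfin

end Directions

section MeanValue

theorem le_of_forall_frequently_le_of_dense_compl_image {α β : Type*}
    [ConditionallyCompleteLinearOrder α] [DenselyOrdered α] [TopologicalSpace α] [OrderTopology α]
    [LinearOrder β] [DenselyOrdered β] [TopologicalSpace β] [OrderClosedTopology β]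
    {h : α → β} {a b : α} {T : Set α} (hab : a ≤ b) (hc : ContinuousOn h (Icc a b))
    (hT : Dense (h '' T)ᶜ) (hle : ∀ x ∈ Ico a b \ T, ∃ᶠ t in 𝓝[>] x, h t ≤ h x) :
    h b ≤ h a := by
  by_contra! hlt
  obtain ⟨y, hyT, hay, hyb⟩ := hT.exists_between hlt
  have hclosed : IsClosed ({t | h t ≤ y} ∩ Icc a b) := by
    simpa only [inter_comm, preimage, mem_Iic] using!
      hc.preimage_isClosed_of_isClosed isClosed_Icc isClosed_Iic
  refine hyb.not_ge (hclosed.mem_of_ge_of_forall_exists_gt hay.le hab ?_)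
  rintro x ⟨hxy : h x ≤ y, hx⟩
  have hfreq : ∃ᶠ t in 𝓝[>] x, h t ≤ y := by
    rcases hxy.lt_or_eq with hlt | rfl
    · have : (𝓝[>] x).NeBot := nhdsGT_neBot_of_exists_gt ⟨b, hx.2⟩
      have hright : ContinuousWithinAt h (Ioi x) x :=
        (hc x (Ico_subset_Icc_self hx)).mono_of_mem_nhdsWithin (Icc_mem_nhdsGT_of_mem hx)
      exact ((hright.eventually_lt_const hlt).mono fun _ ht ↦ ht.le).frequently
    · exact hle x ⟨hx, fun hxT ↦ hyT (mem_image_of_mem h hxT)⟩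
  exact (hfreq.and_eventually (Ioc_mem_nhdsGT hx.2)).exists

variable {E F : Type*} [NormedAddCommGroup E] [NormedSpace ℝ E]
  [NormedAddCommGroup F] [NormedSpace ℝ F]

theorem norm_image_sub_le_of_norm_deriv_right_le_off_countable {g g' : ℝ → F} {a b C : ℝ}
    {T : Set ℝ} (hab : a ≤ b) (hT : T.Countable) (hg : ContinuousOn g (Icc a b))
    (hg' : ∀ x ∈ Ico a b \ T, HasDerivWithinAt g (g' x) (Ici x) x)
    (bound : ∀ x ∈ Ico a b \ T, ‖g' x‖ ≤ C) :
    ‖g b - g a‖ ≤ C * (b - a) := by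
  have le_of_gt : ∀ r > C, ‖g b - g a‖ ≤ r * (b - a) := by
    intro r hr
    let h : ℝ → ℝ := fun t ↦ ‖g t - g a‖ - r * (t - a)
    have hh : ContinuousOn h (Icc a b) := by fun_prop
    have hle : ∀ x ∈ Ico a b \ T, ∃ᶠ t in 𝓝[>] x, h t ≤ h x := by
      intro x hx
      have hslope := ((hg' x hx).sub_const (g a)).liminf_right_slope_norm_le
        ((bound x hx).trans_lt hr)
      refine (hslope.and_eventually self_mem_nhdsWithin).mono fun t ⟨ht, (hxt : x < t)⟩ ↦ ?_
      rw [inv_mul_lt_iff₀ (sub_pos.2 hxt)] at ht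
      simp only [h]
      linarith
    have hba := le_of_forall_frequently_le_of_dense_compl_image hab hh
      ((hT.image h).dense_compl ℝ) hle
    simpa [h] using hba
  have hlim : Tendsto (fun r ↦ r * (b - a)) (𝓝[>] C) (𝓝 (C * (b - a))) :=
    (tendsto_id.mul_const _).mono_left nhdsWithin_le_nhds
  exact ge_of_tendsto hlim (eventually_mem_nhdsWithin.mono le_of_gt)

theorem norm_image_add_sub_le_of_norm_hasFDerivWithin_le_off_countable {f : E → F}
    {f' : E → E →L[ℝ] F} {s : Set E} {x v : E} {C : ℝ}
    (hs : {t : ℝ | x + t • v ∈ s}.Countable) (hf : ContinuousOn f (segment ℝ x (x + v)))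
    (hf' : ∀ w ∈ segment ℝ x (x + v) \ s, HasFDerivWithinAt f (f' w) (segment ℝ x (x + v)) w)
    (bound : ∀ w ∈ segment ℝ x (x + v) \ s, ‖f' w‖ ≤ C) :
    ‖f (x + v) - f x‖ ≤ C * ‖v‖ := by
  have hmaps : MapsTo (fun t : ℝ ↦ x + t • v) (Icc 0 1) (segment ℝ x (x + v)) := by
    rw [segment_eq_image', add_sub_cancel_left]
    exact mapsTo_image _ _
  have hderiv : ∀ t ∈ Ico (0 : ℝ) 1 \ {t : ℝ | x + t • v ∈ s},
      HasDerivWithinAt (fun t : ℝ ↦ f (x + t • v)) (f' (x + t • v) v) (Ici t) t := by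
    rintro t ⟨ht, hts⟩
    have hline : HasDerivWithinAt (fun t : ℝ ↦ x + t • v) v (Icc 0 1) t := by
      simpa using ((hasDerivWithinAt_id t _).smul_const v).const_add x
    exact ((hf' _ ⟨hmaps (Ico_subset_Icc_self ht), hts⟩).comp_hasDerivWithinAt t hline
      hmaps).mono_of_mem_nhdsWithin (Icc_mem_nhdsGE_of_mem ht)
  simpa using norm_image_sub_le_of_norm_deriv_right_le_off_countable zero_le_one hs
    (hf.comp (by fun_prop) hmaps) hderiv fun t ht ↦
      (f' _).le_of_opNorm_le (bound _ ⟨hmaps (Ico_subset_Icc_self ht.1), ht.2⟩) v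

theorem lipschitzOnWith_of_piecewise_differentiable_general {U s : Set E} (hU : IsOpen U)
    (hUconv : Convex ℝ U) {K : ℝ} (hs : Dense {v : E | ∀ x, {t : ℝ | x + t • v ∈ s}.Countable})
    {f : E → F} (hfc : ContinuousOn f U) {f' : E → E →L[ℝ] F}
    (hf' : ∀ x ∈ U \ s, HasFDerivAt f (f' x) x) (hbound : ∀ x ∈ U \ s, ‖f' x‖ ≤ K) :
    ∀ z ∈ U, ∀ z' ∈ U, ‖f z - f z'‖ ≤ K * ‖z - z'‖ := by
  intro z hz z' hz'
  let D : Set E := {w | ∀ x, {t : ℝ | x + t • (w - z') ∈ s}.Countable}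
  have hD : Dense D := hs.preimage (Homeomorph.subRight z').isOpenMap
  have hle : ∀ w ∈ U ∩ D, ‖f w - f z'‖ ≤ K * ‖w - z'‖ := by
    rintro w ⟨hwU, hwD⟩
    have hseg : segment ℝ z' (z' + (w - z')) ⊆ U := by
      rw [add_sub_cancel]
      exact hUconv.segment_subset hz' hwU
    simpa only [add_sub_cancel] using
      norm_image_add_sub_le_of_norm_hasFDerivWithin_le_off_countable (hwD z') (hfc.mono hseg)
        (fun y hy ↦ (hf' y ⟨hseg hy.1, hy.2⟩).hasFDerivWithinAt)
        (fun y hy ↦ hbound y ⟨hseg hy.1, hy.2⟩)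
  have hfz : ContinuousWithinAt f (U ∩ D) z := (hfc z hz).mono inter_subset_left
  exact ContinuousWithinAt.closure_le (hD.open_subset_closure_inter hU hz)
    (hfz.sub continuousWithinAt_const).norm (by fun_prop) hle

end MeanValue

/-- Mean value inequality for piecewise differentiable maps: if `f` is continuous on an
open convex set `U` of a finite-dimensional real normed space, differentiable with
derivative of operator norm at most `K` outside a finite union `s` of proper affine
subspaces (affine subspaces whose direction is a proper linear subspace), then `f` is
`K`-Lipschitz on `U`. -/
theorem lipschitzOnWith_of_piecewise_differentiable
    (E F : Type*) [NormedAddCommGroup E] [NormedSpace ℝ E] [FiniteDimensional ℝ E]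
    [NormedAddCommGroup F] [NormedSpace ℝ F]
    (U : Set E) (hU : IsOpen U) (hUconv : Convex ℝ U) (K : ℝ) (hK : 0 ≤ K)
    (S : Finset (AffineSubspace ℝ E)) (hproper : ∀ W ∈ S, W.direction ≠ ⊤)
    (s : Set E) (hs : s = ⋃ W ∈ S, (W : Set E))
    (f : E → F) (hfc : ContinuousOn f U)
    (f' : E → E →L[ℝ] F)
    (hf' : ∀ x ∈ U \ s, HasFDerivAt f (f' x) x)
    (hbound : ∀ x ∈ U \ s, ‖f' x‖ ≤ K) :
    ∀ z ∈ U, ∀ z' ∈ U, ‖f z - f z'‖ ≤ K * ‖z - z'‖ := by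
  subst hs
  exact lipschitzOnWith_of_piecewise_differentiable_general hU hUconv
    ((dense_setOf_forall_finite_add_smul_mem_biUnion S.finite_toSet hproper).mono
      fun _ hv x ↦ (hv x).countable) hfc hf' hbound
end

section
/- Let ℓ : ℝ² → ℝ^{2n} be a C³ (e.g. smooth), ℤ²-periodic, isotropic map. Then there exists a constant C > 0 such that for every integer N ≥ 1 and every z ∈ ℝ²: |ω( ℓ(z + (1/N, 1/N)) − ℓ(z), ℓ(z + (0, 1/N)) − ℓ(z + (1/N, 0)) )| ≤ C · N^{-4}. Equivalently, the discrete symplectic density η_N(z) := (N²/2)·ω(Dᵘ_N(z), Dᵛ_N(z)) of the samples of ℓ satisfies sup_z |η_N(z)| ≤ C·N^{-2}. -/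
/-- The point of `ℝ² = EuclideanSpace ℝ (Fin 2)` with coordinates `(a, b)`. -/
noncomputable def e2 (a b : ℝ) : EuclideanSpace ℝ (Fin 2) :=
  (WithLp.equiv 2 (Fin 2 → ℝ)).symm ![a, b]

/-- The standard symplectic form `ω` on `ℝ^{2n}`:
`ω(u,v) = ∑_{j=0}^{n-1} (u_{2j} v_{2j+1} − u_{2j+1} v_{2j})`. -/
noncomputable def stdSymp (n : ℕ) (u v : EuclideanSpace ℝ (Fin (2 * n))) : ℝ :=
  ∑ j : Fin n,
    (u ⟨2 * j.1, by have := j.2; omega⟩ * v ⟨2 * j.1 + 1, by have := j.2; omega⟩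
      - u ⟨2 * j.1 + 1, by have := j.2; omega⟩ * v ⟨2 * j.1, by have := j.2; omega⟩)

/-!
The quadrilateral of samples is a parallelogram in the domain. About its centre `c`, with
half-diagonals `p` and `q`, the even Taylor terms cancel in `ℓ (c + p) - ℓ (c - p)`, which therefore
equals `2 Dℓ_c p` up to a cubic error, uniformly in `c` because periodicity makes `ℓ` and `D²ℓ`
globally Lipschitz. Pairing the two diagonals leaves the pulled-back form `4 ω(Dℓ_c p, Dℓ_c q)`,
which vanishes for isotropic `ℓ`, and errors of size (first order) × (third order) = fourth order.
-/

open scoped NNReal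

section Normed

variable {E F G : Type*} [NormedAddCommGroup E] [NormedSpace ℝ E]
  [NormedAddCommGroup F] [NormedSpace ℝ F] [NormedAddCommGroup G] [NormedSpace ℝ G]

theorem hasDerivAt_comp_add_smul {f : E → F} (hf : Differentiable ℝ f) (c v : E) (t : ℝ) :
    HasDerivAt (fun t : ℝ => f (c + t • v)) (fderiv ℝ f (c + t • v) v) t := by
  have hline : HasDerivAt (fun t : ℝ => c + t • v) v t := by
    simpa using ((hasDerivAt_id t).smul_const v).const_add c
  exact (hf _).hasFDerivAt.comp_hasDerivAt t hline

theorem hasDerivAt_comp_sub_smul {f : E → F} (hf : Differentiable ℝ f) (c v : E) (t : ℝ) :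
    HasDerivAt (fun t : ℝ => f (c - t • v)) (-fderiv ℝ f (c - t • v) v) t := by
  simpa [← sub_eq_add_neg] using hasDerivAt_comp_add_smul hf c (-v) t

theorem norm_add_add_sub_sub_two_smul_le {f : E → F} {M : ℝ≥0} (hf : Differentiable ℝ f)
    (hf' : LipschitzWith M (fderiv ℝ f)) (c v : E) :
    ‖f (c + v) + f (c - v) - (2 : ℝ) • f c‖ ≤ 2 * M * ‖v‖ ^ 2 := by
  have bound : ∀ t ∈ Set.Ico (0 : ℝ) 1,
      ‖fderiv ℝ f (c + t • v) v + -fderiv ℝ f (c - t • v) v‖ ≤ 2 * M * ‖v‖ ^ 2 := by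
    rintro t ⟨ht₀, ht₁⟩
    calc ‖fderiv ℝ f (c + t • v) v + -fderiv ℝ f (c - t • v) v‖
        = ‖(fderiv ℝ f (c + t • v) - fderiv ℝ f (c - t • v)) v‖ := by
          rw [← sub_eq_add_neg, sub_apply]
      _ ≤ ‖fderiv ℝ f (c + t • v) - fderiv ℝ f (c - t • v)‖ * ‖v‖ :=
          ContinuousLinearMap.le_opNorm _ _
      _ ≤ M * ‖(c + t • v) - (c - t • v)‖ * ‖v‖ := by gcongr; exact hf'.norm_sub_le _ _
      _ = t * (2 * M * ‖v‖ ^ 2) := by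
          rw [add_sub_sub_cancel, ← two_smul ℝ, norm_smul, norm_smul, Real.norm_ofNat,
            Real.norm_of_nonneg ht₀]
          ring
      _ ≤ 2 * M * ‖v‖ ^ 2 := mul_le_of_le_one_left (by positivity) ht₁.le
  have := norm_image_sub_le_of_norm_deriv_le_segment_01'
    (fun t _ => ((hasDerivAt_comp_add_smul hf c v t).add
      (hasDerivAt_comp_sub_smul hf c v t)).hasDerivWithinAt) bound
  simpa [two_smul] using this

theorem norm_sub_sub_two_smul_fderiv_le {f : E → F} {M : ℝ≥0} (hf : Differentiable ℝ f)
    (hf' : Differentiable ℝ (fderiv ℝ f)) (hf'' : LipschitzWith M (fderiv ℝ (fderiv ℝ f)))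
    (c v : E) :
    ‖f (c + v) - f (c - v) - (2 : ℝ) • fderiv ℝ f c v‖ ≤ 2 * M * ‖v‖ ^ 3 := by
  have hderiv (t : ℝ) :
      HasDerivAt (fun t : ℝ => f (c + t • v) - f (c - t • v) - t • (2 : ℝ) • fderiv ℝ f c v)
        ((fderiv ℝ f (c + t • v) + fderiv ℝ f (c - t • v) - (2 : ℝ) • fderiv ℝ f c) v) t := by
    simpa using ((hasDerivAt_comp_add_smul hf c v t).fun_sub
      (hasDerivAt_comp_sub_smul hf c v t)).fun_sub
      ((hasDerivAt_id t).smul_const ((2 : ℝ) • fderiv ℝ f c v))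
  have bound : ∀ t ∈ Set.Ico (0 : ℝ) 1,
      ‖(fderiv ℝ f (c + t • v) + fderiv ℝ f (c - t • v) - (2 : ℝ) • fderiv ℝ f c) v‖
        ≤ 2 * M * ‖v‖ ^ 3 := by
    rintro t ⟨ht₀, ht₁⟩
    calc ‖(fderiv ℝ f (c + t • v) + fderiv ℝ f (c - t • v) - (2 : ℝ) • fderiv ℝ f c) v‖
        ≤ ‖fderiv ℝ f (c + t • v) + fderiv ℝ f (c - t • v) - (2 : ℝ) • fderiv ℝ f c‖ * ‖v‖ :=
          ContinuousLinearMap.le_opNorm _ _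
      _ ≤ 2 * M * ‖t • v‖ ^ 2 * ‖v‖ := by
          gcongr; exact norm_add_add_sub_sub_two_smul_le hf' hf'' c (t • v)
      _ = t ^ 2 * (2 * M * ‖v‖ ^ 3) := by
          rw [norm_smul, Real.norm_of_nonneg ht₀]; ring
      _ ≤ 2 * M * ‖v‖ ^ 3 := mul_le_of_le_one_left (by positivity) (pow_le_one₀ ht₀ ht₁.le)
  simpa using norm_image_sub_le_of_norm_deriv_le_segment_01'
    (fun t _ => (hderiv t).hasDerivWithinAt) bound

theorem norm_bilin_central_differences_sub_le {f : E → F} {K M : ℝ≥0} (B : F →L[ℝ] F →L[ℝ] G)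
    (hf : Differentiable ℝ f) (hf' : Differentiable ℝ (fderiv ℝ f)) (hK : LipschitzWith K f)
    (hM : LipschitzWith M (fderiv ℝ (fderiv ℝ f))) (c p q : E) :
    ‖B (f (c + p) - f (c - p)) (f (c + q) - f (c - q))
        - B ((2 : ℝ) • fderiv ℝ f c p) ((2 : ℝ) • fderiv ℝ f c q)‖
      ≤ 4 * K * M * ‖B‖ * (‖p‖ * ‖q‖ * (‖p‖ ^ 2 + ‖q‖ ^ 2)) := by
  set u := f (c + p) - f (c - p)
  set v := f (c + q) - f (c - q)
  set u' := (2 : ℝ) • fderiv ℝ f c p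
  set v' := (2 : ℝ) • fderiv ℝ f c q
  have hu : ‖u - u'‖ ≤ 2 * M * ‖p‖ ^ 3 := norm_sub_sub_two_smul_fderiv_le hf hf' hM c p
  have hv : ‖v - v'‖ ≤ 2 * M * ‖q‖ ^ 3 := norm_sub_sub_two_smul_fderiv_le hf hf' hM c q
  have norm_v_le : ‖v‖ ≤ K * (2 * ‖q‖) := by
    refine (hK.norm_sub_le _ _).trans_eq ?_
    rw [add_sub_sub_cancel, ← two_smul ℝ, norm_smul, Real.norm_ofNat]
  have norm_u'_le : ‖u'‖ ≤ 2 * (K * ‖p‖) := by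
    rw [norm_smul, Real.norm_ofNat]
    gcongr
    exact (fderiv ℝ f c).le_of_opNorm_le (norm_fderiv_le_of_lipschitz ℝ hK) p
  calc ‖B u v - B u' v'‖ = ‖B (u - u') v + B u' (v - v')‖ := by simp
    _ ≤ ‖B (u - u') v‖ + ‖B u' (v - v')‖ := norm_add_le _ _
    _ ≤ ‖B‖ * ‖u - u'‖ * ‖v‖ + ‖B‖ * ‖u'‖ * ‖v - v'‖ :=
        add_le_add (B.le_opNorm₂ _ _) (B.le_opNorm₂ _ _)
    _ ≤ ‖B‖ * (2 * M * ‖p‖ ^ 3) * (K * (2 * ‖q‖)) + ‖B‖ * (2 * (K * ‖p‖)) * (2 * M * ‖q‖ ^ 3) := by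
        gcongr
    _ = 4 * K * M * ‖B‖ * (‖p‖ * ‖q‖ * (‖p‖ ^ 2 + ‖q‖ ^ 2)) := by ring

theorem bilin_add_sub_of_self_eq_zero {B : F →L[ℝ] F →L[ℝ] G} (hB : ∀ u, B u u = 0) (u v : F) :
    B (u + v) (v - u) = (2 : ℝ) • B u v := by
  have hadd : B u v + B v u = 0 := by simpa [hB] using hB (u + v)
  calc B (u + v) (v - u) = B u v - B v u := by simp [hB, sub_eq_add_neg]
    _ = (2 : ℝ) • B u v := by rw [eq_neg_of_add_eq_zero_right hadd, sub_neg_eq_add, two_smul]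

theorem norm_bilin_parallelogram_diagonals_sub_le {f : E → F} {K M : ℝ≥0}
    {B : F →L[ℝ] F →L[ℝ] G} (hB : ∀ u, B u u = 0)
    (hf : Differentiable ℝ f) (hf' : Differentiable ℝ (fderiv ℝ f)) (hK : LipschitzWith K f)
    (hM : LipschitzWith M (fderiv ℝ (fderiv ℝ f))) (z a b : E) :
    ‖B (f (z + (a + b)) - f z) (f (z + b) - f (z + a))
        - (2 : ℝ) • B (fderiv ℝ f (z + (1 / 2 : ℝ) • (a + b)) a)
            (fderiv ℝ f (z + (1 / 2 : ℝ) • (a + b)) b)‖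
      ≤ K * M * ‖B‖ / 4 * (‖a + b‖ * ‖b - a‖ * (‖a + b‖ ^ 2 + ‖b - a‖ ^ 2)) := by
  set c := z + (1 / 2 : ℝ) • (a + b) with hc
  have h := norm_bilin_central_differences_sub_le B hf hf' hK hM c
    ((1 / 2 : ℝ) • (a + b)) ((1 / 2 : ℝ) • (b - a))
  have vertices : c + (1 / 2 : ℝ) • (a + b) = z + (a + b) ∧ c - (1 / 2 : ℝ) • (a + b) = z ∧
      c + (1 / 2 : ℝ) • (b - a) = z + b ∧ c - (1 / 2 : ℝ) • (b - a) = z + a := by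
    rw [hc]; refine ⟨?_, ?_, ?_, ?_⟩ <;> module
  have two_smul_half (w : E) : (2 : ℝ) • fderiv ℝ f c ((1 / 2 : ℝ) • w) = fderiv ℝ f c w := by
    rw [map_smul, smul_smul]; norm_num
  obtain ⟨h₁, h₂, h₃, h₄⟩ := vertices
  rw [h₁, h₂, h₃, h₄, two_smul_half, two_smul_half, map_add, (fderiv ℝ f c).map_sub,
    bilin_add_sub_of_self_eq_zero hB, norm_smul, norm_smul] at h
  refine h.trans_eq ?_
  norm_num
  ring

theorem fderiv_add_eq_of_periodic {f : E → F} {γ : E} (hf : ∀ z, f (z + γ) = f z) (z : E) :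
    fderiv ℝ f (z + γ) = fderiv ℝ f z := by
  rw [← fderiv_comp_add_right, funext hf]

variable [FiniteDimensional ℝ E] (L : Submodule ℤ E) [DiscreteTopology L] [IsZLattice ℝ L]

theorem exists_lipschitzWith_of_periodic {f : E → F} (hf : ContDiff ℝ 1 f)
    (hper : ∀ z, ∀ γ ∈ L, f (z + γ) = f z) : ∃ K, LipschitzWith K f := by
  have hrange : IsCompact (Set.range (fderiv ℝ f)) :=
    IsZLattice.isCompact_range_of_periodic L _ (hf.continuous_fderiv one_ne_zero)
      fun z γ hγ => fderiv_add_eq_of_periodic (hper · γ hγ) z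
  obtain ⟨K, hK⟩ := hrange.isBounded.exists_norm_le
  refine ⟨K.toNNReal, lipschitzWith_of_nnnorm_fderiv_le (hf.differentiable one_ne_zero) fun z => ?_⟩
  exact NNReal.le_toNNReal_of_coe_le (hK _ (Set.mem_range_self z))

theorem discrete_symplectic_density_C0_estimate_general {B : F →L[ℝ] F →L[ℝ] G}
    (hB : ∀ u, B u u = 0) {f : E → F} (hf : ContDiff ℝ 3 f)
    (hper : ∀ z, ∀ γ ∈ L, f (z + γ) = f z) (a b : E) :
    ∃ C > 0, ∀ (h : ℝ) (z : E),
      ‖B (f (z + h • (a + b)) - f z) (f (z + h • b) - f (z + h • a))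
          - (2 * h ^ 2) • B (fderiv ℝ f (z + (h / 2) • (a + b)) a)
              (fderiv ℝ f (z + (h / 2) • (a + b)) b)‖ ≤ C * h ^ 4 := by
  have hf' : ContDiff ℝ 2 (fderiv ℝ f) := hf.fderiv_right (by norm_num)
  have hf'' : ContDiff ℝ 1 (fderiv ℝ (fderiv ℝ f)) := hf'.fderiv_right (by norm_num)
  obtain ⟨K, hK⟩ := exists_lipschitzWith_of_periodic L (hf.of_le (by norm_num)) hper
  obtain ⟨M, hM⟩ := exists_lipschitzWith_of_periodic L hf'' fun z γ hγ =>
    fderiv_add_eq_of_periodic (fderiv_add_eq_of_periodic (hper · γ hγ)) z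
  set C := K * M * ‖B‖ / 4 * (‖a + b‖ * ‖b - a‖ * (‖a + b‖ ^ 2 + ‖b - a‖ ^ 2))
  refine ⟨C + 1, by positivity, fun h z => ?_⟩
  calc _ ≤ K * M * ‖B‖ / 4 * (‖h • a + h • b‖ * ‖h • b - h • a‖
        * (‖h • a + h • b‖ ^ 2 + ‖h • b - h • a‖ ^ 2)) := by
        convert norm_bilin_parallelogram_diagonals_sub_le hB (hf.differentiable (by norm_num))
          (hf'.differentiable (by norm_num)) hK hM z (h • a) (h • b) using 2
        simp only [← smul_add, map_smul, smul_smul, smul_apply]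
        ring_nf
    _ = C * h ^ 4 := by
        simp only [← smul_add, ← smul_sub, norm_smul, Real.norm_eq_abs, mul_pow, sq_abs]
        linear_combination (C * h ^ 2) * sq_abs h
    _ ≤ (C + 1) * h ^ 4 := by gcongr; exact le_add_of_nonneg_right zero_le_one

end Normed

theorem isBilinearMap_stdSymp (n : ℕ) : IsBilinearMap ℝ (stdSymp n) where
  add_left u u' v := by
    simp only [stdSymp, PiLp.add_apply, ← Finset.sum_add_distrib]
    exact Finset.sum_congr rfl fun _ _ => by ring
  smul_left r u v := by
    simp only [stdSymp, PiLp.smul_apply, smul_eq_mul, Finset.mul_sum]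
    exact Finset.sum_congr rfl fun _ _ => by ring
  add_right u v v' := by
    simp only [stdSymp, PiLp.add_apply, ← Finset.sum_add_distrib]
    exact Finset.sum_congr rfl fun _ _ => by ring
  smul_right r u v := by
    simp only [stdSymp, PiLp.smul_apply, smul_eq_mul, Finset.mul_sum]
    exact Finset.sum_congr rfl fun _ _ => by ring

theorem stdSymp_self (n : ℕ) (u : EuclideanSpace ℝ (Fin (2 * n))) : stdSymp n u u = 0 :=
  Finset.sum_eq_zero fun _ _ => by ring

theorem e2_add_e2 (a b c d : ℝ) : e2 a b + e2 c d = e2 (a + c) (b + d) := by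
  ext i; fin_cases i <;> rfl

theorem smul_e2 (t a b : ℝ) : t • e2 a b = e2 (t * a) (t * b) := by
  ext i; fin_cases i <;> rfl

theorem exists_int_eq_e2_of_mem_span {γ : EuclideanSpace ℝ (Fin 2)}
    (hγ : γ ∈ Submodule.span ℤ (Set.range (EuclideanSpace.basisFun (Fin 2) ℝ).toBasis)) :
    ∃ k l : ℤ, γ = e2 k l := by
  rw [Module.Basis.mem_span_iff_repr_mem] at hγ
  obtain ⟨k, hk⟩ := hγ 0
  obtain ⟨l, hl⟩ := hγ 1
  refine ⟨k, l, ?_⟩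
  ext i; fin_cases i
  · simpa [e2] using hk.symm
  · simpa [e2] using hl.symm

/-- For a `C³`, `ℤ²`-periodic, isotropic map `ℓ : ℝ² → ℝ^{2n}`, the symplectic area
defect of the sample quadrilaterals is `O(N^{-4})` uniformly:
`|ω(ℓ(z + (1/N,1/N)) − ℓ(z), ℓ(z + (0,1/N)) − ℓ(z + (1/N,0)))| ≤ C·N^{-4}`,
i.e. the discrete symplectic density of the samples is `O(N^{-2})`. -/
theorem discrete_symplectic_density_C0_estimate (n : ℕ)
    (ℓ : EuclideanSpace ℝ (Fin 2) → EuclideanSpace ℝ (Fin (2 * n)))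
    (hC3 : ContDiff ℝ 3 ℓ)
    (hper : ∀ (z : EuclideanSpace ℝ (Fin 2)) (k l : ℤ), ℓ (z + e2 k l) = ℓ z)
    (hiso : ∀ z : EuclideanSpace ℝ (Fin 2),
      stdSymp n (fderiv ℝ ℓ z (e2 1 0)) (fderiv ℝ ℓ z (e2 0 1)) = 0) :
    ∃ C > 0, ∀ (N : ℕ), 1 ≤ N → ∀ z : EuclideanSpace ℝ (Fin 2),
      |stdSymp n (ℓ (z + e2 (1 / N) (1 / N)) - ℓ z)
          (ℓ (z + e2 0 (1 / N)) - ℓ (z + e2 (1 / N) 0))| ≤ C / (N : ℝ) ^ 4 := by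
  obtain ⟨C, hC, hbound⟩ := discrete_symplectic_density_C0_estimate_general
    (Submodule.span ℤ (Set.range (EuclideanSpace.basisFun (Fin 2) ℝ).toBasis))
    (B := (isBilinearMap_stdSymp n).toContinuousBilinearMap) (stdSymp_self n) hC3
    (fun z γ hγ => by obtain ⟨k, l, rfl⟩ := exists_int_eq_e2_of_mem_span hγ; exact hper z k l)
    (e2 1 0) (e2 0 1)
  refine ⟨C, hC, fun N _ z => ?_⟩
  simpa [hiso, e2_add_e2, smul_e2, div_eq_mul_inv, -map_sub] using hbound (1 / N) z
end

section
/- Let T ⊆ ℝ² be a nondegenerate triangle with vertices p₀, p₁, p₂, diameter h, and inradius ρ > 0. Let ℓ : ℝ² → ℝ^m be a C² map, and set M = sup_{z ∈ T} ‖D²ℓ_z‖ (operator norm of the second Fréchet derivative). Let g : ℝ² → ℝ^m be the unique affine map with g(pᵢ) = ℓ(pᵢ) for i = 0, 1, 2. Then there is a constant C > 0, independent of T, ℓ, m, such that: sup_{z ∈ T} ‖g(z) − ℓ(z)‖ ≤ C·M·h², and sup_{z ∈ T} ‖Dg − Dℓ_z‖ ≤ C·M·h²/ρ, where Dg denotes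 the (constant) linear part of g and Dℓ_z the Fréchet derivative of ℓ at z. (Thus on a triangulation whose triangles have size of order N^{-1} and uniformly bounded shape, the piecewise affine interpolant of a smooth map approximates it to order N^{-2} in C⁰ and order N^{-1} in C¹.) -/
/-!
Fix `z ∈ T` and let `τ` be the first-order Taylor map of `ℓ` at `z`. By Taylor's inequality the
affine map `g - τ` has norm at most `M h² / 2` at the vertices, hence by convexity on all of `T`.
Its value at `z` is `g z - ℓ z`, which is the `C⁰` estimate. Its linear part is `Dg - Dℓ_z`: an
affine map bounded by `B` on a disk of radius `ρ` has linear part of norm at most `B / ρ`, as one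
sees by comparing its values at antipodal points, and this is the `C¹` estimate.
-/

open Metric Set
open scoped NNReal

section

variable {E F : Type*} [NormedAddCommGroup E] [NormedSpace ℝ E]
  [NormedAddCommGroup F] [NormedSpace ℝ F]

theorem norm_image_sub_sub_le_of_lipschitzOnWith_hasFDerivWithinAt {T : Set E} {f : E → F}
    {f' : E → E →L[ℝ] F} {K : ℝ≥0} (hT : Convex ℝ T)
    (hf : ∀ x ∈ T, HasFDerivWithinAt f (f' x) T x) (hf' : LipschitzOnWith K f' T)
    {x y : E} (hx : x ∈ T) (hy : y ∈ T) :
    ‖f y - f x - f' x (y - x)‖ ≤ 1 / 2 * K * ‖y - x‖ ^ 2 := by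
  let γ : ℝ → E := AffineMap.lineMap x y
  let r : ℝ → F := fun t ↦ f (γ t) - f x - t • f' x (y - x)
  have γ_mem : MapsTo γ (Icc 0 1) T := fun t ht ↦ hT.lineMap_mem hx hy ht
  have r_deriv : ∀ t ∈ Icc (0 : ℝ) 1,
      HasDerivWithinAt r ((f' (γ t) - f' x) (y - x)) (Icc 0 1) t := fun t ht ↦ by
    have hγ : HasDerivWithinAt γ (y - x) (Icc 0 1) t := AffineMap.hasDerivWithinAt_lineMap
    simpa [r] using (((hf _ (γ_mem ht)).comp_hasDerivWithinAt t hγ γ_mem).sub_const (f x)).fun_sub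
      ((hasDerivWithinAt_id t _).smul_const (f' x (y - x)))
  have bound_deriv (t : ℝ) : HasDerivAt (fun t : ℝ ↦ 1 / 2 * K * ‖y - x‖ ^ 2 * t ^ 2)
      (K * ‖y - x‖ ^ 2 * t) t :=
    ((hasDerivAt_pow 2 t).const_mul _).congr_deriv (by push_cast; ring)
  have r_deriv_le : ∀ t ∈ Ico (0 : ℝ) 1,
      ‖(f' (γ t) - f' x) (y - x)‖ ≤ K * ‖y - x‖ ^ 2 * t := fun t ht ↦ by
    have γ_sub : ‖γ t - x‖ = t * ‖y - x‖ := by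
      simp [γ, AffineMap.lineMap_apply, norm_smul, abs_of_nonneg ht.1]
    calc ‖(f' (γ t) - f' x) (y - x)‖
        ≤ ‖f' (γ t) - f' x‖ * ‖y - x‖ := ContinuousLinearMap.le_opNorm _ _
      _ ≤ K * ‖γ t - x‖ * ‖y - x‖ := by
        gcongr
        exact hf'.norm_sub_le (γ_mem (Ico_subset_Icc_self ht)) hx
      _ = K * ‖y - x‖ ^ 2 * t := by rw [γ_sub]; ring
  have r_le := image_norm_le_of_norm_deriv_right_le_deriv_boundary
    (fun t ht ↦ (r_deriv t ht).continuousWithinAt)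
    (fun t ht ↦ (r_deriv t (Ico_subset_Icc_self ht)).mono_of_mem_nhdsWithin
      (Icc_mem_nhdsGE_of_mem ht))
    (by simp [r, γ]) bound_deriv r_deriv_le (right_mem_Icc.2 zero_le_one)
  simpa [r, γ] using r_le

theorem norm_affineMap_le_of_mem_convexHull {V : Type*} [AddCommGroup V] [Module ℝ V]
    {s : Set V} {a : V →ᵃ[ℝ] F} {B : ℝ} (ha : ∀ p ∈ s, ‖a p‖ ≤ B) {x : V}
    (hx : x ∈ convexHull ℝ s) : ‖a x‖ ≤ B := by
  have hs : s ⊆ a ⁻¹' closedBall 0 B := fun p hp ↦ mem_closedBall_zero_iff.2 (ha p hp)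
  exact mem_closedBall_zero_iff.1 (convexHull_min hs ((convex_closedBall 0 B).affine_preimage a) hx)

theorem norm_contLinear_le_div_of_forall_mem_closedBall {a : E →ᴬ[ℝ] F} {c : E} {ρ B : ℝ}
    (hρ : 0 < ρ) (ha : ∀ x ∈ closedBall c ρ, ‖a x‖ ≤ B) : ‖a.contLinear‖ ≤ B / ρ := by
  have hB : 0 ≤ B := (norm_nonneg _).trans (ha c (mem_closedBall_self hρ.le))
  refine ContinuousLinearMap.opNorm_le_of_unit_norm (by positivity) fun u hu ↦ ?_
  have antipodal : (2 * ρ) • a.contLinear u = a (c + ρ • u) - a (c - ρ • u) := by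
    rw [← vsub_eq_sub, ← a.contLinear_map_vsub, ← map_smul, vsub_eq_sub]
    congr 1
    module
  have norm_le : 2 * ρ * ‖a.contLinear u‖ ≤ B + B := by
    calc 2 * ρ * ‖a.contLinear u‖ = ‖a (c + ρ • u) - a (c - ρ • u)‖ := by
          rw [← antipodal, norm_smul, Real.norm_of_nonneg (by positivity)]
      _ ≤ B + B := norm_sub_le_of_le
          (ha _ (by simp [norm_smul, hu, abs_of_pos hρ]))
          (ha _ (by simp [norm_smul, hu, abs_of_pos hρ]))
  rw [le_div_iff₀ hρ]
  linarith

/-- The first-order Taylor map `x ↦ y + L (x - z)` at `z` of a map with value `y` and derivative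
`L` there; value and derivative are passed separately, so that `L` may be a derivative within a
set. -/
def taylorAffineMap (L : E →L[ℝ] F) (z : E) (y : F) : E →ᴬ[ℝ] F :=
  L.toContinuousAffineMap + ContinuousAffineMap.const ℝ E (y - L z)

theorem taylorAffineMap_apply (L : E →L[ℝ] F) (z : E) (y : F) (x : E) :
    taylorAffineMap L z y x = y + L (x - z) := by
  simp only [taylorAffineMap, ContinuousAffineMap.add_apply, ContinuousAffineMap.coe_const,
    ContinuousLinearMap.coe_toContinuousAffineMap, Function.const_apply, map_sub]
  abel

theorem taylorAffineMap_contLinear (L : E →L[ℝ] F) (z : E) (y : F) :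
    (taylorAffineMap L z y).contLinear = L := by
  simp [taylorAffineMap]

theorem norm_sub_taylorAffineMap_le_of_eqOn {s : Set E} (hs : Bornology.IsBounded s) {f : E → F}
    {f' : E → E →L[ℝ] F} {K : ℝ≥0}
    (hf : ∀ x ∈ convexHull ℝ s, HasFDerivWithinAt f (f' x) (convexHull ℝ s) x)
    (hf' : LipschitzOnWith K f' (convexHull ℝ s)) {g : E →ᴬ[ℝ] F} (hg : EqOn g f s)
    {z w : E} (hz : z ∈ convexHull ℝ s) (hw : w ∈ convexHull ℝ s) :
    ‖(g - taylorAffineMap (f' z) z (f z)) w‖ ≤ 1 / 2 * K * diam s ^ 2 := by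
  refine norm_affineMap_le_of_mem_convexHull
    (a := (g - taylorAffineMap (f' z) z (f z)).toAffineMap) (fun p hp ↦ ?_) hw
  have hpT : p ∈ convexHull ℝ s := subset_convexHull ℝ s hp
  have hpz : ‖p - z‖ ≤ diam s := by
    rw [← dist_eq_norm, ← convexHull_diam]
    exact dist_le_diam_of_mem (isBounded_convexHull.2 hs) hpT hz
  calc ‖(g - taylorAffineMap (f' z) z (f z)) p‖ = ‖f p - f z - f' z (p - z)‖ := by
        rw [ContinuousAffineMap.sub_apply, hg hp, taylorAffineMap_apply, sub_sub]
    _ ≤ 1 / 2 * K * ‖p - z‖ ^ 2 :=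
        norm_image_sub_sub_le_of_lipschitzOnWith_hasFDerivWithinAt (convex_convexHull ℝ s)
          hf hf' hz hpT
    _ ≤ 1 / 2 * K * diam s ^ 2 := by gcongr

theorem affine_interpolation_estimate_general {s : Set E} (hs : Bornology.IsBounded s) {f : E → F}
    {f' : E → E →L[ℝ] F} {K : ℝ≥0}
    (hf : ∀ x ∈ convexHull ℝ s, HasFDerivWithinAt f (f' x) (convexHull ℝ s) x)
    (hf' : LipschitzOnWith K f' (convexHull ℝ s)) {g : E →ᴬ[ℝ] F} (hg : EqOn g f s)
    {c : E} {ρ : ℝ} (hρ : 0 < ρ) (hc : closedBall c ρ ⊆ convexHull ℝ s)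
    {z : E} (hz : z ∈ convexHull ℝ s) :
    ‖g z - f z‖ ≤ 1 / 2 * K * diam s ^ 2 ∧
      ‖g.contLinear - f' z‖ ≤ 1 / 2 * K * diam s ^ 2 / ρ := by
  have error_le {w : E} (hw : w ∈ convexHull ℝ s) :=
    norm_sub_taylorAffineMap_le_of_eqOn hs hf hf' hg hz hw
  constructor
  · simpa [taylorAffineMap_apply] using error_le hz
  · simpa [taylorAffineMap_contLinear] using
      norm_contLinear_le_div_of_forall_mem_closedBall hρ fun w hw ↦ error_le (hc hw)

end

/-- Piecewise affine interpolation estimate: there is a universal constant `C > 0` such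
that for every nondegenerate triangle `T ⊆ ℝ²` with vertices `p₀, p₁, p₂`, diameter
`h` and a disk of radius `ρ > 0` inscribed in `T`, every `C²` map `ℓ : ℝ² → ℝ^m` with
`‖D²ℓ‖ ≤ M` on `T`, and the affine map `g` interpolating `ℓ` at the vertices, one has
`‖g − ℓ‖ ≤ C·M·h²` and `‖Dg − Dℓ‖ ≤ C·M·h²/ρ` on `T`. -/
theorem affine_interpolation_estimate :
    ∃ C > 0, ∀ (m : ℕ) (p₀ p₁ p₂ : EuclideanSpace ℝ (Fin 2)),
      AffineIndependent ℝ ![p₀, p₁, p₂] →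
      ∀ (h ρ M : ℝ),
        Metric.diam (convexHull ℝ ({p₀, p₁, p₂} : Set (EuclideanSpace ℝ (Fin 2)))) = h →
        0 < ρ →
        (∃ c : EuclideanSpace ℝ (Fin 2),
          Metric.closedBall c ρ ⊆ convexHull ℝ ({p₀, p₁, p₂} : Set (EuclideanSpace ℝ (Fin 2)))) →
        ∀ ℓ : EuclideanSpace ℝ (Fin 2) → EuclideanSpace ℝ (Fin m),
          ContDiff ℝ 2 ℓ →
          (∀ z ∈ convexHull ℝ ({p₀, p₁, p₂} : Set (EuclideanSpace ℝ (Fin 2))),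
            ‖fderiv ℝ (fderiv ℝ ℓ) z‖ ≤ M) →
          ∀ g : EuclideanSpace ℝ (Fin 2) →ᵃ[ℝ] EuclideanSpace ℝ (Fin m),
            g p₀ = ℓ p₀ → g p₁ = ℓ p₁ → g p₂ = ℓ p₂ →
            ∀ z ∈ convexHull ℝ ({p₀, p₁, p₂} : Set (EuclideanSpace ℝ (Fin 2))),
              ‖g z - ℓ z‖ ≤ C * M * h ^ 2 ∧
              ‖(LinearMap.toContinuousLinearMap g.linear) - fderiv ℝ ℓ z‖ ≤
                C * M * h ^ 2 / ρ := by
  refine ⟨1 / 2, by norm_num, ?_⟩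
  rintro m p₀ p₁ p₂ - _ ρ M rfl hρ ⟨c, hc⟩ ℓ hℓ hM g h₀ h₁ h₂ z hz
  lift M to ℝ≥0 using (norm_nonneg (fderiv ℝ (fderiv ℝ ℓ) z)).trans (hM z hz)
  have hDℓ : Differentiable ℝ (fderiv ℝ ℓ) :=
    (hℓ.fderiv_right (m := 1) (by norm_num)).differentiable one_ne_zero
  rw [convexHull_diam]
  exact affine_interpolation_estimate_general (Set.toFinite _).isBounded
    (fun x _ ↦ (hℓ.differentiable two_ne_zero x).hasFDerivAt.hasFDerivWithinAt)
    ((convex_convexHull ℝ _).lipschitzOnWith_of_nnnorm_fderiv_le (fun x _ ↦ hDℓ x) hM)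
    (g := ⟨g, g.continuous_of_finiteDimensional⟩) (by simp [Set.EqOn, h₀, h₁, h₂]) hρ hc hz
end
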